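/- Let Y ∈ ℝ^{n×n} and write (1/2)(Y + Yᵀ) = P Ω Pᵀ with P orthogonal and Ω = Diag(ω₁,…,ωₙ) with ω₁ ≤ ω₂ ≤ … ≤ ωₙ, and set ω̄ := (ωₙ, ω_{n−1}, …, ω₁) ∈ ℝⁿ. Suppose λ* attains the minimum of (1/2)‖λ − ω̄‖₂² over Λ(A,b) := {λ ∈ ℝⁿ : Aλ ≤ b, λ₁ ≥ … ≥ λₙ}. Then X* := P Diag(λ*ₙ, λ*_{n−1}, …, λ*₁) Pᵀ belongs to S_λ(A,b) and is a global minimizer of X ↦ (1/2)‖X − Y‖_F² over S_λ(A,b). -/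

import Mathlib

open Matrix

/-- The vector of eigenvalues of a real symmetric matrix, in descending order
(junk value `0` if the matrix is not symmetric). -/
noncomputable def eigs {n : ℕ} (X : Matrix (Fin n) (Fin n) ℝ) : Fin n → ℝ :=
  if hX : X.IsHermitian then
    fun i => (hX.eigenvalues ∘ Tuple.sort hX.eigenvalues) i.rev
  else fun _ => 0

/-- The eigenvalue constraint set `S_λ(A,b) = {X ∈ S^{n×n} : A λ(X) ≤ b}`. -/
def SLambda {m n : ℕ} (A : Matrix (Fin m) (Fin n) ℝ) (b : Fin m → ℝ) :
    Set (Matrix (Fin n) (Fin n) ℝ) :=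
  {X | X.IsHermitian ∧ ∀ i, A.mulVec (eigs X) i ≤ b i}

/-- The polyhedron `Λ(A,b) = {λ ∈ ℝⁿ : Aλ ≤ b, λ₁ ≥ … ≥ λₙ}`. -/
def LambdaSet {m n : ℕ} (A : Matrix (Fin m) (Fin n) ℝ) (b : Fin m → ℝ) :
    Set (Fin n → ℝ) :=
  {l | (∀ i, A.mulVec l i ≤ b i) ∧ Antitone l}

/-- The squared Frobenius norm of a real square matrix. -/
def frobSq {n : ℕ} (M : Matrix (Fin n) (Fin n) ℝ) : ℝ :=
  ∑ i, ∑ j, (M i j) ^ 2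

/-!
A symmetric `X` is orthogonal to the skew part of `Y`, so up to a constant `frobSq (X - Y)` is the
squared distance from `X` to the symmetric part `S` of `Y`. By the Hoffman–Wielandt inequality that
distance is at least the one between the ordered spectra of `X` and `S`, with equality when
`X` and `S` are diagonalized by the same orthogonal matrix in the same order. Minimizing over
matrices thus reduces to minimizing over ordered spectra.

For Hoffman–Wielandt, write `X = Q diag(d) Qᵀ`, `S = P diag(w) Pᵀ` and `W = Qᵀ P`. Then
`frobSq (X - S) = ∑ i j, (d i - w j) ^ 2 * W i j ^ 2`, which is linear in the doubly stochastic
matrix `W i j ^ 2`; by Birkhoff's theorem it suffices to bound it at permutation matrices, where the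
bound is the rearrangement inequality.
-/

section DoublyStochastic

variable {ι R : Type*} [Fintype ι]

lemma sum_sq_sub_le_sum_sq_sub_comp_perm [CommRing R] [LinearOrder R] [IsStrictOrderedRing R]
    {d w : ι → R} (hdw : Monovary d w) (σ : Equiv.Perm ι) :
    ∑ i, (d i - w i) ^ 2 ≤ ∑ i, (d i - w (σ i)) ^ 2 := by
  have rearrangement : ∑ i, d i * w (σ i) ≤ ∑ i, d i * w i := hdw.sum_mul_comp_perm_le_sum_mul
  have sum_sq_perm : ∑ i, w (σ i) ^ 2 = ∑ i, w i ^ 2 := Equiv.sum_comp σ fun i => w i ^ 2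
  simp only [sub_sq, Finset.sum_add_distrib, Finset.sum_sub_distrib, mul_assoc,
    ← Finset.mul_sum, sum_sq_perm]
  linarith

variable [DecidableEq ι]

lemma map_sq_mem_doublyStochastic [CommRing R] [LinearOrder R] [IsStrictOrderedRing R]
    {W : Matrix ι ι R} (hW : Wᵀ * W = 1) : W.map (· ^ 2) ∈ doublyStochastic R ι := by
  have hW' : W * Wᵀ = 1 := mul_eq_one_comm.mp hW
  refine mem_doublyStochastic_iff_sum.mpr ⟨fun i j => sq_nonneg (W i j), fun i => ?_, fun j => ?_⟩
  · simpa [Matrix.mul_apply, sq] using congrFun₂ hW' i i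
  · simpa [Matrix.mul_apply, sq] using congrFun₂ hW j j

variable [Field R] [LinearOrder R] [IsStrictOrderedRing R]

lemma le_sum_mul_of_mem_doublyStochastic {M : Matrix ι ι R} (hM : M ∈ doublyStochastic R ι)
    {C : Matrix ι ι R} {B : R} (hB : ∀ σ : Equiv.Perm ι, B ≤ ∑ i, C i (σ i)) :
    B ≤ ∑ i, ∑ j, C i j * M i j := by
  obtain ⟨c, hc_nonneg, hc_sum, rfl⟩ := exists_eq_sum_perm_of_mem_doublyStochastic hM
  have sum_mul_permMatrix (σ : Equiv.Perm ι) :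
      ∑ i, ∑ j, C i j * σ.permMatrix R i j = ∑ i, C i (σ i) := by
    simp [Equiv.Perm.permMatrix, PEquiv.toMatrix_apply, Equiv.toPEquiv_apply]
  calc B = ∑ σ, c σ * B := by rw [← Finset.sum_mul, hc_sum, one_mul]
    _ ≤ ∑ σ, c σ * ∑ i, C i (σ i) := by gcongr with σ; exacts [hc_nonneg σ, hB σ]
    _ = ∑ σ, ∑ i, ∑ j, C i j * (c σ * σ.permMatrix R i j) := by
      simp only [← sum_mul_permMatrix, Finset.mul_sum, mul_left_comm]
    _ = ∑ i, ∑ j, C i j * (∑ σ, c σ • σ.permMatrix R) i j := by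
      simp only [Matrix.sum_apply, Matrix.smul_apply, smul_eq_mul, Finset.mul_sum]
      rw [Finset.sum_comm]
      exact Finset.sum_congr rfl fun i _ => Finset.sum_comm

end DoublyStochastic

section Frobenius

variable {n : ℕ}

lemma frobSq_eq_trace (M : Matrix (Fin n) (Fin n) ℝ) : frobSq M = (Mᵀ * M).trace := by
  simp only [frobSq, Matrix.trace, Matrix.diag, Matrix.mul_apply, Matrix.transpose_apply, sq]
  exact Finset.sum_comm

lemma frobSq_mul_left {U : Matrix (Fin n) (Fin n) ℝ} (hU : Uᵀ * U = 1)
    (M : Matrix (Fin n) (Fin n) ℝ) : frobSq (U * M) = frobSq M := by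
  rw [frobSq_eq_trace, frobSq_eq_trace, Matrix.transpose_mul, Matrix.mul_assoc,
    ← Matrix.mul_assoc Uᵀ, hU, Matrix.one_mul]

lemma frobSq_mul_right {V : Matrix (Fin n) (Fin n) ℝ} (hV : V * Vᵀ = 1)
    (M : Matrix (Fin n) (Fin n) ℝ) : frobSq (M * V) = frobSq M := by
  rw [frobSq_eq_trace, frobSq_eq_trace, Matrix.transpose_mul, ← Matrix.mul_assoc,
    Matrix.trace_mul_comm, ← Matrix.mul_assoc, ← Matrix.mul_assoc, hV, Matrix.one_mul]

lemma frobSq_add_of_isSymm_of_transpose_eq_neg {S K : Matrix (Fin n) (Fin n) ℝ}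
    (hS : S.IsSymm) (hK : Kᵀ = -K) : frobSq (S + K) = frobSq S + frobSq K := by
  simp only [frobSq_eq_trace, Matrix.transpose_add, hS.eq, hK, add_mul, mul_add, neg_mul,
    Matrix.trace_add, Matrix.trace_neg, Matrix.trace_mul_comm K S]
  ring

lemma frobSq_sub_eq_add_of_isSymm {X : Matrix (Fin n) (Fin n) ℝ} (hX : X.IsSymm)
    (Y : Matrix (Fin n) (Fin n) ℝ) :
    frobSq (X - Y) =
      frobSq (X - (1 / 2 : ℝ) • (Y + Yᵀ)) + frobSq ((1 / 2 : ℝ) • (Yᵀ - Y)) := by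
  rw [← frobSq_add_of_isSymm_of_transpose_eq_neg]
  · congr 1
    module
  · exact hX.sub ((Matrix.isSymm_add_transpose_self Y).smul _)
  · rw [Matrix.transpose_smul, Matrix.transpose_sub, Matrix.transpose_transpose, ← smul_neg,
      neg_sub]

lemma frobSq_conj_diagonal_sub_conj_diagonal {P Q : Matrix (Fin n) (Fin n) ℝ}
    (hP : Pᵀ * P = 1) (hQ : Qᵀ * Q = 1) (d w : Fin n → ℝ) :
    frobSq (Q * diagonal d * Qᵀ - P * diagonal w * Pᵀ) =
      ∑ i, ∑ j, (d i - w j) ^ 2 * (Qᵀ * P) i j ^ 2 := by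
  have hQ' : Q * Qᵀ = 1 := mul_eq_one_comm.mp hQ
  have hP' : P * Pᵀ = 1 := mul_eq_one_comm.mp hP
  have factor : Q * diagonal d * Qᵀ - P * diagonal w * Pᵀ =
      Q * (diagonal d * (Qᵀ * P) - Qᵀ * P * diagonal w) * Pᵀ := by
    calc _ = Q * diagonal d * Qᵀ * (P * Pᵀ) - Q * Qᵀ * (P * diagonal w * Pᵀ) := by
          rw [hQ', hP', Matrix.mul_one, Matrix.one_mul]
      _ = _ := by simp only [Matrix.mul_sub, Matrix.sub_mul, Matrix.mul_assoc]
  rw [factor, frobSq_mul_right (by rwa [transpose_transpose]), frobSq_mul_left hQ]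
  refine Finset.sum_congr rfl fun i _ => Finset.sum_congr rfl fun j _ => ?_
  rw [Matrix.sub_apply, Matrix.diagonal_mul, Matrix.mul_diagonal]
  ring

lemma frobSq_conj_diagonal_sub_same {P : Matrix (Fin n) (Fin n) ℝ} (hP : Pᵀ * P = 1)
    (d w : Fin n → ℝ) :
    frobSq (P * diagonal d * Pᵀ - P * diagonal w * Pᵀ) = ∑ i, (d i - w i) ^ 2 := by
  simp [frobSq_conj_diagonal_sub_conj_diagonal hP hP, hP, Matrix.one_apply]

lemma sum_sq_sub_le_frobSq_conj_diagonal_sub {P Q : Matrix (Fin n) (Fin n) ℝ}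
    (hP : Pᵀ * P = 1) (hQ : Qᵀ * Q = 1) {d w : Fin n → ℝ} (hdw : Monovary d w) :
    ∑ i, (d i - w i) ^ 2 ≤ frobSq (Q * diagonal d * Qᵀ - P * diagonal w * Pᵀ) := by
  have hW : (Qᵀ * P)ᵀ * (Qᵀ * P) = 1 := by
    rw [Matrix.transpose_mul, Matrix.transpose_transpose, Matrix.mul_assoc, ← Matrix.mul_assoc Q,
      mul_eq_one_comm.mp hQ, Matrix.one_mul, hP]
  rw [frobSq_conj_diagonal_sub_conj_diagonal hP hQ]
  exact le_sum_mul_of_mem_doublyStochastic (map_sq_mem_doublyStochastic hW)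
    (C := of fun i j => (d i - w j) ^ 2) (sum_sq_sub_le_sum_sq_sub_comp_perm hdw)

end Frobenius

section Eigenvalues

variable {n : ℕ}

lemma isHermitian_conj_diagonal (P : Matrix (Fin n) (Fin n) ℝ) (d : Fin n → ℝ) :
    (P * diagonal d * Pᵀ).IsHermitian :=
  isHermitian_mul_mul_conjTranspose P (isHermitian_diagonal d)

lemma eigs_comp_rev {X : Matrix (Fin n) (Fin n) ℝ} (hX : X.IsHermitian) :
    eigs X ∘ Fin.rev = hX.eigenvalues ∘ Tuple.sort hX.eigenvalues := by
  funext i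
  rw [Function.comp_apply, eigs, dif_pos hX, Fin.rev_rev]

lemma antitone_eigs (X : Matrix (Fin n) (Fin n) ℝ) : Antitone (eigs X) := by
  unfold eigs
  split_ifs with hX
  · exact (Tuple.monotone_sort hX.eigenvalues).comp_antitone Fin.rev_anti
  · exact antitone_const

lemma monotone_eigs_comp_rev (X : Matrix (Fin n) (Fin n) ℝ) : Monotone (eigs X ∘ Fin.rev) :=
  (antitone_eigs X).comp Fin.rev_anti

lemma exists_conj_diagonal_eigs {X : Matrix (Fin n) (Fin n) ℝ} (hX : X.IsHermitian) :
    ∃ Q : Matrix (Fin n) (Fin n) ℝ, Qᵀ * Q = 1 ∧ X = Q * diagonal (eigs X ∘ Fin.rev) * Qᵀ := by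
  let U : Matrix (Fin n) (Fin n) ℝ := hX.eigenvectorUnitary
  let σ := Tuple.sort hX.eigenvalues
  have hU : Uᵀ * U = 1 := Unitary.coe_star_mul_self hX.eigenvectorUnitary
  have spectral : X = U * diagonal hX.eigenvalues * Uᵀ := hX.spectral_theorem
  refine ⟨U.submatrix id σ, ?_, ?_⟩
  · rw [Matrix.transpose_submatrix, ← Matrix.submatrix_mul _ _ _ _ _ Function.bijective_id, hU]
    exact Matrix.submatrix_one_equiv σ
  · rw [eigs_comp_rev hX, ← Matrix.submatrix_diagonal_equiv, Matrix.transpose_submatrix,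
      Matrix.submatrix_mul_equiv, Matrix.submatrix_mul_equiv, ← spectral, Matrix.submatrix_id_id]

/-- The Hoffman–Wielandt inequality. -/
theorem sum_sq_eigs_sub_eigs_le_frobSq_sub {X Z : Matrix (Fin n) (Fin n) ℝ}
    (hX : X.IsHermitian) (hZ : Z.IsHermitian) :
    ∑ i, (eigs X i - eigs Z i) ^ 2 ≤ frobSq (X - Z) := by
  obtain ⟨Q, hQ, hXQ⟩ := exists_conj_diagonal_eigs hX
  obtain ⟨P, hP, hZP⟩ := exists_conj_diagonal_eigs hZ
  have hmonovary : Monovary (eigs X ∘ Fin.rev) (eigs Z ∘ Fin.rev) :=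
    (monotone_eigs_comp_rev X).monovary (monotone_eigs_comp_rev Z)
  calc ∑ i, (eigs X i - eigs Z i) ^ 2
      = ∑ i, ((eigs X ∘ Fin.rev) i - (eigs Z ∘ Fin.rev) i) ^ 2 :=
        (Equiv.sum_comp Fin.revPerm fun i => (eigs X i - eigs Z i) ^ 2).symm
    _ ≤ frobSq (Q * diagonal (eigs X ∘ Fin.rev) * Qᵀ - P * diagonal (eigs Z ∘ Fin.rev) * Pᵀ) :=
        sum_sq_sub_le_frobSq_conj_diagonal_sub hP hQ hmonovary
    _ = frobSq (X - Z) := by rw [← hXQ, ← hZP]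

-- Any two monotone diagonalizations of the same matrix agree: the squared distance between their
-- diagonals is at most `frobSq 0`.
lemma eigs_conj_diagonal_of_monotone {P : Matrix (Fin n) (Fin n) ℝ} (hP : Pᵀ * P = 1)
    {d : Fin n → ℝ} (hd : Monotone d) : eigs (P * diagonal d * Pᵀ) = d ∘ Fin.rev := by
  set X := P * diagonal d * Pᵀ
  obtain ⟨Q, hQ, hXQ⟩ := exists_conj_diagonal_eigs (isHermitian_conj_diagonal P d)
  have sum_sq_le_zero : ∑ i, ((eigs X ∘ Fin.rev) i - d i) ^ 2 ≤ 0 := by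
    have h := sum_sq_sub_le_frobSq_conj_diagonal_sub hP hQ
      ((monotone_eigs_comp_rev X).monovary hd)
    rw [← hXQ, sub_self] at h
    simpa [frobSq] using h
  have term_sq_eq_zero := (Finset.sum_eq_zero_iff_of_nonneg fun i _ => sq_nonneg _).mp
    (sum_sq_le_zero.antisymm (Finset.sum_nonneg fun i _ => sq_nonneg _))
  have eigs_comp_rev_eq : eigs X ∘ Fin.rev = d :=
    funext fun i => sub_eq_zero.mp (sq_eq_zero_iff.mp (term_sq_eq_zero i (Finset.mem_univ i)))
  simp [← eigs_comp_rev_eq, Function.comp_def]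

end Eigenvalues

theorem statement8_general {n : ℕ} (C : Set (Fin n → ℝ))
    (Y P : Matrix (Fin n) (Fin n) ℝ) (ω : Fin n → ℝ)
    (hP : Pᵀ * P = 1) (hω : Monotone ω)
    (hdecomp : (1 / 2 : ℝ) • (Y + Yᵀ) = P * Matrix.diagonal ω * Pᵀ)
    (lam : Fin n → ℝ) (hfeas : lam ∈ C ∧ Antitone lam)
    (hopt : ∀ μ, μ ∈ C ∧ Antitone μ →
      (1 / 2 : ℝ) * ∑ i : Fin n, (lam i - ω i.rev) ^ 2 ≤
      (1 / 2 : ℝ) * ∑ i : Fin n, (μ i - ω i.rev) ^ 2) :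
    let Xopt := P * Matrix.diagonal (fun i : Fin n => lam i.rev) * Pᵀ
    (Xopt.IsHermitian ∧ eigs Xopt ∈ C) ∧
    ∀ X : Matrix (Fin n) (Fin n) ℝ, X.IsHermitian ∧ eigs X ∈ C →
      (1 / 2 : ℝ) * frobSq (Xopt - Y) ≤ (1 / 2 : ℝ) * frobSq (X - Y) := by
  intro Xopt
  have hXopt : Xopt.IsHermitian := isHermitian_conj_diagonal P _
  have eigs_Xopt : eigs Xopt = lam := by
    rw [eigs_conj_diagonal_of_monotone hP fun i j hij => hfeas.2 (Fin.rev_anti hij)]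
    simp [Function.comp_def]
  refine ⟨⟨hXopt, eigs_Xopt ▸ hfeas.1⟩, fun X ⟨hX, hXC⟩ => ?_⟩
  set S := P * diagonal ω * Pᵀ
  have dist_Xopt : frobSq (Xopt - S) = ∑ i, (lam i - ω i.rev) ^ 2 := by
    rw [frobSq_conj_diagonal_sub_same hP, ← Equiv.sum_comp Fin.revPerm]
    simp
  have dist_X : ∑ i, (eigs X i - ω i.rev) ^ 2 ≤ frobSq (X - S) := by
    simpa only [S, eigs_conj_diagonal_of_monotone hP hω, Function.comp_apply] using
      sum_sq_eigs_sub_eigs_le_frobSq_sub hX (isHermitian_conj_diagonal P ω)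
  have lam_le := hopt (eigs X) ⟨hXC, antitone_eigs X⟩
  rw [frobSq_sub_eq_add_of_isSymm (isHermitian_iff_isSymm.mp hXopt),
    frobSq_sub_eq_add_of_isSymm (isHermitian_iff_isSymm.mp hX), hdecomp, dist_Xopt]
  linarith

/-- Exact projection onto the eigenvalue constraint set: if
`(1/2)(Y + Yᵀ) = P Diag(ω) Pᵀ` with `P` orthogonal and `ω` ascending, `ω̄ = (ωₙ,…,ω₁)`,
and `λ*` minimizes `(1/2)‖λ − ω̄‖²` over `Λ(A,b)`, then
`X* = P Diag(λ*ₙ,…,λ*₁) Pᵀ` is a global minimizer of `(1/2)‖X − Y‖_F²` over `S_λ(A,b)`. -/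
theorem statement8 {m n : ℕ} (A : Matrix (Fin m) (Fin n) ℝ) (b : Fin m → ℝ)
    (Y P : Matrix (Fin n) (Fin n) ℝ) (ω : Fin n → ℝ)
    (hP : Pᵀ * P = 1) (hP' : P * Pᵀ = 1)
    (hω : Monotone ω)
    (hdecomp : (1 / 2 : ℝ) • (Y + Yᵀ) = P * Matrix.diagonal ω * Pᵀ)
    (lam : Fin n → ℝ)
    (hfeas : lam ∈ LambdaSet A b)
    (hopt : ∀ μ ∈ LambdaSet A b,
      (1 / 2 : ℝ) * ∑ i : Fin n, (lam i - ω i.rev) ^ 2 ≤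
      (1 / 2 : ℝ) * ∑ i : Fin n, (μ i - ω i.rev) ^ 2) :
    P * Matrix.diagonal (fun i : Fin n => lam i.rev) * Pᵀ ∈ SLambda A b ∧
    ∀ X ∈ SLambda A b,
      (1 / 2 : ℝ) * frobSq (P * Matrix.diagonal (fun i : Fin n => lam i.rev) * Pᵀ - Y) ≤
      (1 / 2 : ℝ) * frobSq (X - Y) :=
  statement8_general {l | ∀ i, A.mulVec l i ≤ b i} Y P ω hP hω hdecomp lam hfeas hopt
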